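/- Let π* be an optimal assignment for weights w and let Δ^k be the iterates of the recursive sensitivity algorithm. Then for every edge (a,b) the real sequence k ↦ Δ^k(a,b) converges; i.e., there exists a perturbation Δ^∞ such that Δ^k(a,b) → Δ^∞(a,b) for every edge (a,b). -/

import Mathlib

open Finset Filter Topology

/-- Cost of an assignment `π : T → A` under weights `w : A × T → ℝ`. -/
noncomputable def cost {A T : Type*} [Fintype T] (w : A × T → ℝ) (π : T → A) : ℝ :=
  ∑ b : T, w (π b, b)

/-- `πs` is an optimal assignment for weights `w`: it is injective (an assignment)
and minimizes the cost among all assignments. -/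
def Optimal {A T : Type*} [Fintype T] (w : A × T → ℝ) (πs : T → A) : Prop :=
  Function.Injective πs ∧ ∀ π : T → A, Function.Injective π → cost w πs ≤ cost w π

/-- `δ` is an allowable perturbation for `(w, πs)`: `πs` remains optimal for `w + δ`. -/
def Allowable {A T : Type*} [Fintype T] (w δ : A × T → ℝ) (πs : T → A) : Prop :=
  Optimal (w + δ) πs

-- The element-wise sensitivity of edge `(a, b)` for weights `w` and assignment `πs`.
open Classical in
noncomputable def sens {A T : Type*} [Fintype T] (w : A × T → ℝ) (πs : T → A)
    (a : A) (b : T) : ℝ :=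
  if πs b = a then
    sInf {c | ∃ π : T → A, Function.Injective π ∧ π b ≠ a ∧ cost w π = c} - cost w πs
  else
    cost w πs - sInf {c | ∃ π : T → A, Function.Injective π ∧ π b = a ∧ cost w π = c}

/-- Iterates of the recursive sensitivity algorithm: `Δ⁰ = 0` and
`Δ^{k+1}(a,b) = Δ^k(a,b) + s_{w+Δ^k}(a,b)/(2N)` with `N = |T|`. -/
noncomputable def iter {A T : Type*} [Fintype T] (w : A × T → ℝ) (πs : T → A) :
    ℕ → (A × T → ℝ)
  | 0 => 0
  | k + 1 => fun e =>
      iter w πs k e + sens (w + iter w πs k) πs e.1 e.2 / (2 * (Fintype.card T : ℝ))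

/-!
Write `gap π = cost w π - cost w πs ≥ 0`. On a task where `π` and `πs` differ, each of the two edges
has sensitivity at most `gap π` in absolute value, and the sensitivities push the assigned edge up
and the other edge down. A step of size `1 / (2N)` therefore closes at most `gap π / N` of the gap
per task, hence at most `gap π` in total, and `πs` stays optimal forever. So `Δ^k` is monotone on
assigned edges and antitone on the others; since these changes all work against the same initial
gap, which never becomes negative, each of them is bounded by it, and every coordinate converges.
-/

theorem exists_injective_apply_eq {A T : Type*} {σ : T → A} (hσ : Function.Injective σ) (a : A)
    (b : T) : ∃ π : T → A, Function.Injective π ∧ π b = a := by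
  classical
  exact ⟨Equiv.swap (σ b) a ∘ σ, (Equiv.injective _).comp hσ, by simp⟩

section Assignment

variable {A T : Type*} [Fintype T] {w δ : A × T → ℝ} {π πs : T → A} {a : A} {b : T}

theorem cost_add (w δ : A × T → ℝ) (π : T → A) : cost (w + δ) π = cost w π + cost δ π := by
  simp [cost, sum_add_distrib]

theorem cost_sub_cost (w : A × T → ℝ) (π σ : T → A) :
    cost w π - cost w σ = ∑ b, (w (π b, b) - w (σ b, b)) := by
  simp [cost, sum_sub_distrib]

theorem optimal_add_iff : Optimal (w + δ) πs ↔ Function.Injective πs ∧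
    ∀ π : T → A, Function.Injective π → cost δ πs - cost δ π ≤ cost w π - cost w πs := by
  simp only [Optimal, cost_add, sub_le_sub_iff, add_comm]

namespace Optimal

theorem cost_mem_lowerBounds (hopt : Optimal w πs) (P : (T → A) → Prop) :
    cost w πs ∈ lowerBounds {c | ∃ π : T → A, Function.Injective π ∧ P π ∧ cost w π = c} := by
  rintro _ ⟨π, hπ, -, rfl⟩
  exact hopt.2 π hπ

theorem sens_assigned_nonneg [Nontrivial A] (hopt : Optimal w πs) (b : T) :
    0 ≤ sens w πs (πs b) b := by
  obtain ⟨a, ha⟩ := exists_ne (πs b)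
  obtain ⟨π, hπ, rfl⟩ := exists_injective_apply_eq hopt.1 a b
  rw [sens, if_pos rfl, sub_nonneg]
  exact le_csInf ⟨_, π, hπ, ha, rfl⟩ (hopt.cost_mem_lowerBounds _)

theorem sens_unassigned_nonpos (hopt : Optimal w πs) (hab : πs b ≠ a) : sens w πs a b ≤ 0 := by
  obtain ⟨π, hπ, hb⟩ := exists_injective_apply_eq hopt.1 a b
  rw [sens, if_neg hab, sub_nonpos]
  exact le_csInf ⟨_, π, hπ, hb, rfl⟩ (hopt.cost_mem_lowerBounds _)

theorem sens_assigned_le (hopt : Optimal w πs) (hπ : Function.Injective π) (hb : π b ≠ πs b) :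
    sens w πs (πs b) b ≤ cost w π - cost w πs := by
  rw [sens, if_pos rfl]
  gcongr
  exact csInf_le ⟨_, hopt.cost_mem_lowerBounds _⟩ ⟨π, hπ, hb, rfl⟩

theorem le_sens_unassigned (hopt : Optimal w πs) (hπ : Function.Injective π) (hb : π b ≠ πs b) :
    cost w πs - cost w π ≤ sens w πs (π b) b := by
  rw [sens, if_neg hb.symm]
  gcongr
  exact csInf_le ⟨_, hopt.cost_mem_lowerBounds _⟩ ⟨π, hπ, rfl, rfl⟩

theorem sens_sub_sens_le (hopt : Optimal w πs) (hπ : Function.Injective π) (b : T) :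
    sens w πs (πs b) b - sens w πs (π b) b ≤ 2 * (cost w π - cost w πs) := by
  by_cases hb : π b = πs b
  · rw [hb, sub_self]
    linarith [hopt.2 π hπ]
  · linarith [hopt.sens_assigned_le hπ hb, hopt.le_sens_unassigned hπ hb]

theorem add_smul_sens (hopt : Optimal w πs) {t : ℝ} (ht₀ : 0 ≤ t)
    (ht₁ : t * (2 * Fintype.card T) ≤ 1) :
    Optimal (w + t • fun e ↦ sens w πs e.1 e.2) πs := by
  refine optimal_add_iff.2 ⟨hopt.1, fun π hπ ↦ ?_⟩
  have hgap : 0 ≤ cost w π - cost w πs := sub_nonneg.2 (hopt.2 π hπ)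
  calc
    cost (t • fun e ↦ sens w πs e.1 e.2) πs - cost (t • fun e ↦ sens w πs e.1 e.2) π
      = ∑ b, t * (sens w πs (πs b) b - sens w πs (π b) b) := by
      simp only [cost_sub_cost, Pi.smul_apply, smul_eq_mul, mul_sub]
    _ ≤ ∑ _b : T, t * (2 * (cost w π - cost w πs)) := by
      gcongr with b
      exact hopt.sens_sub_sens_le hπ b
    _ = t * (2 * Fintype.card T) * (cost w π - cost w πs) := by
      rw [sum_const, card_univ, nsmul_eq_mul]
      ring
    _ ≤ cost w π - cost w πs := mul_le_of_le_one_left hgap ht₁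

end Optimal

theorem Allowable.sub_le_cost_sub_cost (hδ : Allowable w δ πs)
    (hle : ∀ a b, δ (a, b) ≤ δ (πs b, b)) (hπ : Function.Injective π) (b : T) :
    δ (πs b, b) - δ (π b, b) ≤ cost w π - cost w πs :=
  calc
    δ (πs b, b) - δ (π b, b) ≤ ∑ c, (δ (πs c, c) - δ (π c, c)) :=
      single_le_sum (f := fun c ↦ δ (πs c, c) - δ (π c, c))
        (fun c _ ↦ sub_nonneg.2 (hle (π c) c)) (mem_univ b)
    _ = cost δ πs - cost δ π := (cost_sub_cost δ πs π).symm
    _ ≤ cost w π - cost w πs := (optimal_add_iff.1 hδ).2 π hπ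

section Convergence

variable {ι : Type*} [Preorder ι] [OrderBot ι] {Δ : ι → A × T → ℝ}

theorem assigned_sub_unassigned_le_of_allowable (hΔ : ∀ i, Allowable w (Δ i) πs)
    (hmono : ∀ b, Monotone fun i ↦ Δ i (πs b, b))
    (hanti : ∀ a b, πs b ≠ a → Antitone fun i ↦ Δ i (a, b))
    (hπ : Function.Injective π) (i : ι) (b : T) :
    (Δ i - Δ ⊥) (πs b, b) - (Δ i - Δ ⊥) (π b, b) ≤ cost (w + Δ ⊥) π - cost (w + Δ ⊥) πs := by
  have hallow : Allowable (w + Δ ⊥) (Δ i - Δ ⊥) πs := by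
    simpa only [Allowable, add_assoc, add_sub_cancel] using hΔ i
  refine hallow.sub_le_cost_sub_cost (fun a c ↦ ?_) hπ b
  obtain rfl | hac := eq_or_ne (πs c) a
  · rfl
  · exact (sub_nonpos.2 (hanti a c hac bot_le)).trans (sub_nonneg.2 (hmono c bot_le))

theorem exists_tendsto_of_allowable [Nontrivial A] (hΔ : ∀ i, Allowable w (Δ i) πs)
    (hmono : ∀ b, Monotone fun i ↦ Δ i (πs b, b))
    (hanti : ∀ a b, πs b ≠ a → Antitone fun i ↦ Δ i (a, b)) (a : A) (b : T) :
    ∃ l, Tendsto (fun i ↦ Δ i (a, b)) atTop (𝓝 l) := by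
  have hbound {π : T → A} (hπ : Function.Injective π) (i : ι) :=
    assigned_sub_unassigned_le_of_allowable hΔ hmono hanti hπ i b
  simp only [Pi.sub_apply] at hbound
  obtain rfl | hab := eq_or_ne (πs b) a
  · obtain ⟨a, ha⟩ := exists_ne (πs b)
    obtain ⟨π, hπ, rfl⟩ := exists_injective_apply_eq (hΔ ⊥).1 a b
    refine ⟨_, tendsto_atTop_ciSup (hmono b)
      ⟨Δ ⊥ (πs b, b) + (cost (w + Δ ⊥) π - cost (w + Δ ⊥) πs), ?_⟩⟩
    rintro _ ⟨i, rfl⟩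
    linarith [hbound hπ i, hanti _ b ha.symm (bot_le : ⊥ ≤ i)]
  · obtain ⟨π, hπ, rfl⟩ := exists_injective_apply_eq (hΔ ⊥).1 a b
    refine ⟨_, tendsto_atTop_ciInf (hanti _ b hab)
      ⟨Δ ⊥ (π b, b) - (cost (w + Δ ⊥) π - cost (w + Δ ⊥) πs), ?_⟩⟩
    rintro _ ⟨i, rfl⟩
    linarith [hbound hπ i, hmono b (bot_le : ⊥ ≤ i)]

end Convergence

theorem iter_succ (w : A × T → ℝ) (πs : T → A) (k : ℕ) :
    iter w πs (k + 1) = iter w πs k +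
      (2 * (Fintype.card T : ℝ))⁻¹ • fun e ↦ sens (w + iter w πs k) πs e.1 e.2 := by
  ext e
  simp only [iter, Pi.add_apply, Pi.smul_apply, smul_eq_mul, div_eq_inv_mul]

namespace Optimal

theorem allowable_iter (hopt : Optimal w πs) (k : ℕ) : Allowable w (iter w πs k) πs := by
  induction k with
  | zero => simpa only [Allowable, iter, add_zero] using hopt
  | succ k ih =>
    rw [Allowable, iter_succ, ← add_assoc]
    exact ih.add_smul_sens (by positivity) inv_mul_le_one

theorem monotone_iter_assigned [Nontrivial A] (hopt : Optimal w πs) (b : T) :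
    Monotone fun k ↦ iter w πs k (πs b, b) :=
  monotone_nat_of_le_succ fun k ↦ le_add_of_nonneg_right <|
    div_nonneg ((hopt.allowable_iter k).sens_assigned_nonneg b) (by positivity)

theorem antitone_iter_unassigned (hopt : Optimal w πs) (hab : πs b ≠ a) :
    Antitone fun k ↦ iter w πs k (a, b) :=
  antitone_nat_of_succ_le fun k ↦ add_le_of_nonpos_right <|
    div_nonpos_of_nonpos_of_nonneg ((hopt.allowable_iter k).sens_unassigned_nonpos hab)
      (by positivity)

end Optimal

end Assignment

theorem stmt15_general {A T : Type*} [Nontrivial A] [Fintype T]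
    (w : A × T → ℝ) (πs : T → A)
    (hopt : Optimal w πs) :
    ∃ Δinf : A × T → ℝ, ∀ a b,
      Tendsto (fun k => iter w πs k (a, b)) atTop (𝓝 (Δinf (a, b))) := by
  choose l hl using exists_tendsto_of_allowable hopt.allowable_iter hopt.monotone_iter_assigned
    fun _ _ ↦ hopt.antitone_iter_unassigned
  exact ⟨fun e ↦ l e.1 e.2, hl⟩

theorem stmt15 {A T : Type*} [Fintype A] [Fintype T] [Nonempty A] [Nonempty T]
    (hT : 2 ≤ Fintype.card T) (hAT : Fintype.card T ≤ Fintype.card A)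
    (w : A × T → ℝ) (πs : T → A)
    (hopt : Optimal w πs) :
    ∃ Δinf : A × T → ℝ, ∀ a b,
      Tendsto (fun k => iter w πs k (a, b)) atTop (𝓝 (Δinf (a, b))) := by
  have : Nontrivial A := Fintype.one_lt_card_iff_nontrivial.1 (hT.trans hAT)
  exact stmt15_general w πs hopt
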